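/- Let σ₁, σ₂ > 0, let w : ℝ^d → [0,1]^d be measurable with ‖w(m₁)‖₂ > 0 for all m₁, and let g : ℝ^d × ℝ^d → Y be measurable into a finite label set Y. Define the two-step mechanism M(X) ∈ Y as g(m₁, m₂), where m₁ = X + z₁ with z₁ ∼ N(0, σ₁²I_d), and m₂ = w(m₁) ⊙ X + z₂ with z₂ ∼ N(0, (‖w(m₁)‖₂²/d)·σ₂²·I_d) drawn independently of z₁ given m₁ (⊙ is the element-wise product). Let X ∈ ℝ^d, y₊ ∈ Y, and p₊, p₋ ∈ (0,1) satisfy P(M(X) = y₊) ≥ p₊ ≥ p₋ ≥ max_{y ≠ y₊} P(M(X) = y). Set r^∞_X = (1/(2√(d·(1/σ₁² + 1/σ₂²))))·(Φ⁻¹(p₊) − Φ⁻¹(p₋)). Then for every e ∈ ℝ^d with ‖e‖_∞ ≤ r^∞_X and every y ∈ Y, P(M(X+e) = y₊) ≥ P(M(X+e) = y). -/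

import Mathlib

open MeasureTheory ProbabilityTheory Real
open scoped NNReal ENNReal

/-- Standard normal CDF Φ. -/
noncomputable def Phi (x : ℝ) : ℝ := ((gaussianReal 0 1) (Set.Iic x)).toReal

/-- Inverse of the standard normal CDF, Φ⁻¹. -/
noncomputable def PhiInv (q : ℝ) : ℝ := Function.invFun Phi q

/-- The trade-off function of the Gaussian mechanism, `G_μ(α) = Φ(Φ⁻¹(1-α) − μ)`. -/
noncomputable def Gmu (μ α : ℝ) : ℝ := Phi (PhiInv (1 - α) - μ)

/-- Euclidean (L2) norm on `ℝ^n`. -/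
noncomputable def l2norm {n : ℕ} (x : Fin n → ℝ) : ℝ := Real.sqrt (∑ i, (x i) ^ 2)

/-- Maximum (L∞) norm on `ℝ^n`. -/
noncomputable def linftyNorm {n : ℕ} (x : Fin n → ℝ) : ℝ := ⨆ i, |x i|

/-- Lp norm on `ℝ^n`. -/
noncomputable def lpNorm {n : ℕ} (p : ℝ) (x : Fin n → ℝ) : ℝ := (∑ i, |x i| ^ p) ^ (1 / p)

/-- `T(P,Q) ≥ f`: every measurable `[0,1]`-valued test `φ` has type II error
`1 − ∫ φ dQ` at least `f` of its level `∫ φ dP`. -/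
def TradeoffGE {Ω : Type*} [MeasurableSpace Ω] (P Q : Measure Ω) (f : ℝ → ℝ) : Prop :=
  ∀ φ : Ω → ℝ, Measurable φ → (∀ ω, φ ω ∈ Set.Icc (0 : ℝ) 1) →
    1 - ∫ ω, φ ω ∂Q ≥ f (∫ ω, φ ω ∂P)

/-- The Gaussian measure `N(v, s·I_d)` on `ℝ^d` (spherical covariance `s ≥ 0`). -/
noncomputable def gaussPi (d : ℕ) (v : Fin d → ℝ) (s : ℝ≥0) : Measure (Fin d → ℝ) :=
  Measure.pi fun i => gaussianReal (v i) s

/-- The two-step masked mechanism for `L_∞` certification: `m₁ = X + z₁` with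
`z₁ ∼ N(0, σ₁² I_d)`; given `m₁`, `m₂ = w(m₁) ⊙ X + z₂` with
`z₂ ∼ N(0, (‖w(m₁)‖₂²/d)·σ₂²·I_d)`; the output is `g(m₁, m₂)`. -/
noncomputable def maskedMech {d : ℕ} {Y : Type*} [MeasurableSpace Y]
    (σ₁ σ₂ : ℝ) (w : (Fin d → ℝ) → (Fin d → ℝ))
    (g : (Fin d → ℝ) → (Fin d → ℝ) → Y) (X : Fin d → ℝ) : Measure Y :=
  (gaussPi d X (σ₁ ^ 2).toNNReal).bind fun m₁ =>
    (gaussPi d (fun i => w m₁ i * X i)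
        ((l2norm (w m₁)) ^ 2 / d * σ₂ ^ 2).toNNReal).map (g m₁)

/-!
The likelihood ratio between two Gaussians with equal covariance is a Wick exponential of a centred
Gaussian variable whose variance is the squared Mahalanobis distance `c` of the means, so its
hockey-stick divergences depend only on `c`. They increase with `c` and satisfy a tower identity in
`c`. If the conditional likelihood ratio of the second observation is dominated by budget `c₂`
whatever the first one was, conditioning on the first observation shows that an adaptive composition
is dominated by the sum of the budgets. The first step spends at most `d ‖e‖∞² / σ₁²`, and the
normalisation of the second noise variance by `‖w‖₂² / d` makes the second step spend at most
`d ‖e‖∞² / σ₂²` for every mask. The Neyman–Pearson identity for two Gaussians turns the total budget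
`r²` into the statement that no event separates the two outputs better than a shift by `r` separates
standard normal variables, and two such shifts fit between `Φ⁻¹ p₋` and `Φ⁻¹ p₊`.
-/

section

open Set Filter Topology Function

theorem continuous_cdf (μ : Measure ℝ) [IsProbabilityMeasure μ] [NullSingletonClass μ] :
    Continuous (cdf μ) := by
  refine continuous_iff_continuousAt.2 fun a =>
    continuousAt_iff_continuous_left'_right'.2 ⟨?_, ?_⟩
  · have hjump : ENNReal.ofReal (cdf μ a - leftLim (cdf μ) a) = 0 := by
      rw [← StieltjesFunction.measure_singleton, measure_cdf, measure_singleton]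
    rw [(monotone_cdf μ).continuousWithinAt_Iio_iff_leftLim_eq]
    exact ((monotone_cdf μ).leftLim_le le_rfl).antisymm
      (sub_nonpos.1 (ENNReal.ofReal_eq_zero.1 hjump))
  · exact ((cdf μ).right_continuous a).mono Ioi_subset_Ici_self

theorem exists_cdf_eq (μ : Measure ℝ) [IsProbabilityMeasure μ] [NullSingletonClass μ] {p : ℝ}
    (hp : p ∈ Ioo (0 : ℝ) 1) : ∃ x, cdf μ x = p := by
  obtain ⟨a, ha⟩ := ((tendsto_cdf_atBot μ).eventually_lt_const hp.1).exists
  obtain ⟨b, hb⟩ := ((tendsto_cdf_atTop μ).eventually_const_lt hp.2).exists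
  exact mem_range_of_exists_le_of_exists_ge (continuous_cdf μ) ⟨a, ha.le⟩ ⟨b, hb.le⟩

theorem Phi_eq_cdf (x : ℝ) : Phi x = cdf (gaussianReal 0 1) x :=
  (cdf_eq_real _ x).symm

theorem monotone_Phi : Monotone Phi := fun x y h => by
  simpa only [Phi_eq_cdf] using monotone_cdf _ h

theorem Phi_PhiInv {p : ℝ} (hp : p ∈ Ioo (0 : ℝ) 1) : Phi (PhiInv p) = p := by
  have := nullSingletonClass_gaussianReal (μ := 0) one_ne_zero
  refine Function.invFun_eq ?_
  simpa only [Phi_eq_cdf] using exists_cdf_eq (gaussianReal 0 1) hp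

theorem Phi_neg (x : ℝ) : Phi (-x) = 1 - Phi x := by
  have := nullSingletonClass_gaussianReal (μ := 0) one_ne_zero
  calc Phi (-x) = ((gaussianReal 0 1).map Neg.neg).real (Iic (-x)) := by
        rw [gaussianReal_map_neg, neg_zero]; rfl
    _ = (gaussianReal 0 1).real (Ici x) := by
        rw [map_measureReal_apply measurable_neg measurableSet_Iic, neg_preimage, neg_Iic, neg_neg]
    _ = (gaussianReal 0 1).real (Iic x)ᶜ := by
        rw [compl_Iic, measureReal_congr Ioi_ae_eq_Ici]
    _ = 1 - Phi x := probReal_compl_eq_one_sub measurableSet_Iic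

theorem withDensity_apply_le_mul_add_lintegral_tsub {α : Type*} [MeasurableSpace α]
    (μ : Measure α) (f : α → ℝ≥0∞) (k : ℝ≥0∞) {s : Set α}
    (hs : MeasurableSet s) : μ.withDensity f s ≤ k * μ s + ∫⁻ x, (f x - k) ∂μ :=
  calc μ.withDensity f s = ∫⁻ x in s, f x ∂μ := withDensity_apply f hs
    _ ≤ ∫⁻ x in s, (k + (f x - k)) ∂μ := lintegral_mono fun _ => le_add_tsub
    _ = k * μ s + ∫⁻ x in s, (f x - k) ∂μ := by
        rw [lintegral_add_left measurable_const, setLIntegral_const]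
    _ ≤ k * μ s + ∫⁻ x, (f x - k) ∂μ := by gcongr; exact Measure.restrict_le_self

theorem withDensity_apply_eq_mul_add_lintegral_tsub {α : Type*} [MeasurableSpace α]
    (μ : Measure α) {f : α → ℝ≥0∞} {k : ℝ≥0∞} {s : Set α}
    (hs : MeasurableSet s) (hsk : ∀ x ∈ s, k ≤ f x) (hsck : ∀ x ∉ s, f x ≤ k) :
    μ.withDensity f s = k * μ s + ∫⁻ x, (f x - k) ∂μ := by
  have hcompl : ∫⁻ x in sᶜ, (f x - k) ∂μ = 0 :=
    setLIntegral_eq_zero hs.compl fun x hx => tsub_eq_zero_of_le (hsck x hx)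
  calc μ.withDensity f s = ∫⁻ x in s, f x ∂μ := withDensity_apply f hs
    _ = ∫⁻ x in s, (k + (f x - k)) ∂μ :=
        setLIntegral_congr_fun hs fun x hx => (add_tsub_cancel_of_le (hsk x hx)).symm
    _ = k * μ s + ∫⁻ x, (f x - k) ∂μ := by
        rw [lintegral_add_left measurable_const, setLIntegral_const,
          ← lintegral_add_compl (μ := μ) _ hs, hcompl, add_zero]

theorem withDensity_compProd_eq_withDensity {α β : Type*} [MeasurableSpace α] [MeasurableSpace β]
    {μ : Measure α} [SFinite μ] {κ η : Kernel α β} [IsSFiniteKernel κ] [IsSFiniteKernel η]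
    {f : α → ℝ≥0∞} {g : α → β → ℝ≥0∞} (hf : Measurable f) (hg : Measurable (uncurry g))
    (hη : ∀ a, η a = (κ a).withDensity (g a)) :
    μ.withDensity f ⊗ₘ η = (μ ⊗ₘ κ).withDensity fun p => f p.1 * g p.1 p.2 := by
  have hfg : Measurable fun p : α × β => f p.1 * g p.1 p.2 := (hf.comp measurable_fst).mul hg
  ext s hs
  rw [Measure.compProd_apply hs, withDensity_apply _ hs, ← lintegral_indicator hs,
    Measure.lintegral_compProd (hfg.indicator hs),
    lintegral_withDensity_eq_lintegral_mul _ hf (Kernel.measurable_kernel_prodMk_left hs)]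
  refine lintegral_congr fun a => ?_
  have hsa : MeasurableSet (Prod.mk a ⁻¹' s) := measurable_prodMk_left hs
  rw [Pi.mul_apply, hη, withDensity_apply _ hsa,
    ← lintegral_const_mul _ hg.of_uncurry_left, ← lintegral_indicator hsa]
  rfl

theorem map_uncurry_compProd {α β γ : Type*} [MeasurableSpace α] [MeasurableSpace β]
    [MeasurableSpace γ] (μ : Measure α) [SFinite μ] (κ : Kernel α β) [IsSFiniteKernel κ]
    {g : α → β → γ} (hg : Measurable (uncurry g)) :
    (μ ⊗ₘ κ).map (uncurry g) = μ.bind fun a => (κ a).map (g a) := by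
  have happly {s : Set γ} (hs : MeasurableSet s) (a : α) :
      (κ a).map (g a) s = κ a (Prod.mk a ⁻¹' (uncurry g ⁻¹' s)) :=
    Measure.map_apply hg.of_uncurry_left hs
  have hmeas : Measurable fun a => (κ a).map (g a) :=
    Measure.measurable_of_measurable_coe _ fun s hs => by
      simp only [happly hs]
      exact Kernel.measurable_kernel_prodMk_left (hg hs)
  ext s hs
  rw [Measure.map_apply hg hs, Measure.compProd_apply (hg hs),
    Measure.bind_apply hs hmeas.aemeasurable]
  exact lintegral_congr fun a => (happly hs a).symm

theorem pi_withDensity {ι : Type*} [Fintype ι] {E : ι → Type*} [∀ i, MeasurableSpace (E i)]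
    {μ : ∀ i, Measure (E i)} [∀ i, IsProbabilityMeasure (μ i)] {f : ∀ i, E i → ℝ≥0∞}
    [∀ i, SigmaFinite ((μ i).withDensity (f i))] (hf : ∀ i, Measurable (f i)) :
    Measure.pi (fun i => (μ i).withDensity (f i)) =
      (Measure.pi μ).withDensity fun x => ∏ i, f i (x i) := by
  refine Measure.pi_eq fun s hs => ?_
  have hfs : ∀ i, Measurable ((s i).indicator (f i)) := fun i => (hf i).indicator (hs i)
  have hindicator : ∀ x, (univ.pi s).indicator (fun x => ∏ i, f i (x i)) x =
      ∏ i, (s i).indicator (f i) (x i) := fun x => by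
    by_cases hx : x ∈ univ.pi s
    · rw [indicator_of_mem hx]
      exact Finset.prod_congr rfl fun i _ => (indicator_of_mem (hx i trivial) _).symm
    · obtain ⟨i, hi⟩ : ∃ i, x i ∉ s i := by simpa using hx
      rw [indicator_of_notMem hx,
        Finset.prod_eq_zero (Finset.mem_univ i) (indicator_of_notMem hi _)]
  have hindep : iIndepFun (fun i x => (s i).indicator (f i) (x i)) (Measure.pi μ) :=
    iIndepFun_pi fun i => (hfs i).aemeasurable
  calc (Measure.pi μ).withDensity (fun x => ∏ i, f i (x i)) (univ.pi s)
      = ∫⁻ x, ∏ i, (s i).indicator (f i) (x i) ∂Measure.pi μ := by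
        rw [withDensity_apply _ (.univ_pi hs), ← lintegral_indicator (.univ_pi hs)]
        exact lintegral_congr hindicator
    _ = ∏ i, ∫⁻ x, (s i).indicator (f i) (x i) ∂Measure.pi μ :=
        lintegral_prod_eq_prod_lintegral_of_indepFun _ _ hindep
          fun i => (hfs i).comp (measurable_pi_apply i)
    _ = ∏ i, (μ i).withDensity (f i) (s i) := by
        refine Finset.prod_congr rfl fun i _ => ?_
        rw [(measurePreserving_eval μ i).lintegral_comp (hfs i), lintegral_indicator (hs i),
          withDensity_apply _ (hs i)]

theorem hasLaw_gaussianReal_sum {Ω ι : Type*} [MeasurableSpace Ω] {P : Measure Ω}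
    {X : ι → Ω → ℝ} {m : ι → ℝ} {v : ι → ℝ≥0} (hindep : iIndepFun X P)
    (hX : ∀ i, HasLaw (X i) (gaussianReal (m i) (v i)) P) (s : Finset ι) :
    HasLaw (∑ i ∈ s, X i) (gaussianReal (∑ i ∈ s, m i) (∑ i ∈ s, v i)) P := by
  classical
  have := hindep.isProbabilityMeasure
  induction s using Finset.induction_on with
  | empty =>
    simpa only [Finset.sum_empty, gaussianReal_zero_var] using
      hasLaw_dirac_of_ae_eq (X := 0) (x := 0) (Eventually.of_forall fun _ => rfl)
  | insert i s hi ih =>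
    have hadd : IndepFun (X i) (∑ j ∈ s, X j) P :=
      (hindep.indepFun_finsetSum_of_notMem₀ (fun j => (hX j).aemeasurable) hi).symm
    simp_rw [Finset.sum_insert hi]
    rw [← gaussianReal_conv_gaussianReal]
    exact hadd.hasLaw_add (hX i) ih

/-- The Wick exponential `exp (y - c / 2)` of a centred Gaussian value `y` of variance `c`. It has
mean `1`, and every likelihood ratio between two Gaussians with equal covariance is of this form. -/
noncomputable def wickExp (c : ℝ≥0) (y : ℝ) : ℝ≥0∞ :=
  ENNReal.ofReal (exp (y - c / 2))

@[fun_prop]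
theorem measurable_wickExp {α : Type*} [MeasurableSpace α] {c : α → ℝ≥0} {y : α → ℝ}
    (hc : Measurable c) (hy : Measurable y) : Measurable fun a => wickExp (c a) (y a) := by
  unfold wickExp; fun_prop

theorem wickExp_mono (c : ℝ≥0) : Monotone (wickExp c) := fun _ _ h => by
  unfold wickExp; gcongr

theorem wickExp_add (c c' : ℝ≥0) (y y' : ℝ) :
    wickExp (c + c') (y + y') = wickExp c y * wickExp c' y' := by
  rw [wickExp, wickExp, wickExp, ← ENNReal.ofReal_mul (exp_nonneg _), ← exp_add, NNReal.coe_add]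
  ring_nf

theorem wickExp_sum {ι : Type*} (s : Finset ι) (c : ι → ℝ≥0) (y : ι → ℝ) :
    wickExp (∑ i ∈ s, c i) (∑ i ∈ s, y i) = ∏ i ∈ s, wickExp (c i) (y i) := by
  simp only [wickExp, ← ENNReal.ofReal_prod_of_nonneg fun _ _ => exp_nonneg _, ← exp_sum,
    Finset.sum_sub_distrib, Finset.sum_div, NNReal.coe_sum]

theorem lintegral_wickExp (c : ℝ≥0) : ∫⁻ y, wickExp c y ∂gaussianReal 0 c = 1 := by
  have hmgf : ∫ y, exp y ∂gaussianReal 0 c = exp (c / 2) := by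
    simpa [mgf] using congrFun (mgf_id_gaussianReal (μ := 0) (v := c)) 1
  have hint : Integrable exp (gaussianReal 0 c) := by
    simpa only [one_mul] using integrable_exp_mul_gaussianReal (μ := 0) (v := c) 1
  simp only [wickExp, exp_sub]
  rw [← ofReal_integral_eq_lintegral_ofReal (hint.div_const _) (ae_of_all _ fun _ => by positivity),
    integral_div, hmgf, div_self (exp_ne_zero _), ENNReal.ofReal_one]

theorem gaussianReal_eq_withDensity_wickExp (m m' : ℝ) {s : ℝ≥0} (hs : s ≠ 0) :
    gaussianReal m' s = (gaussianReal m s).withDensity fun x =>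
      wickExp (‖m' - m‖₊ ^ 2 / s) ((m' - m) * (x - m) / s) := by
  have hs' : (s : ℝ) ≠ 0 := NNReal.coe_ne_zero.2 hs
  rw [gaussianReal_of_var_ne_zero _ hs, gaussianReal_of_var_ne_zero _ hs,
    ← withDensity_mul _ (measurable_gaussianPDF m s) (by fun_prop)]
  congr 1 with x
  rw [Pi.mul_apply, gaussianPDF, gaussianPDF, wickExp,
    ← ENNReal.ofReal_mul (gaussianPDFReal_nonneg m s x), gaussianPDFReal, gaussianPDFReal,
    mul_assoc _ (exp _), ← exp_add]
  congr 3
  simp only [NNReal.coe_div, NNReal.coe_pow, coe_nnnorm, Real.norm_eq_abs, sq_abs]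
  field_simp
  ring

/-- The expected excess over `k` of `a` times the likelihood ratio `wickExp c` under `N(0, c)`:
the hockey-stick divergence between Gaussians at squared Mahalanobis distance `c`. -/
noncomputable def gaussianExcess (c : ℝ≥0) (a k : ℝ≥0∞) : ℝ≥0∞ :=
  ∫⁻ y, (a * wickExp c y - k) ∂gaussianReal 0 c

theorem tsub_le_gaussianExcess (c : ℝ≥0) (a k : ℝ≥0∞) : a - k ≤ gaussianExcess c a k :=
  calc a - k = ∫⁻ y, a * wickExp c y ∂gaussianReal 0 c - ∫⁻ _, k ∂gaussianReal 0 c := by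
        rw [lintegral_const_mul _ (by fun_prop), lintegral_wickExp, mul_one,
          lintegral_const, measure_univ, mul_one]
    _ ≤ gaussianExcess c a k := lintegral_sub_le _ _ measurable_const

theorem gaussianExcess_add (c c' : ℝ≥0) (a k : ℝ≥0∞) :
    gaussianExcess (c + c') a k =
      ∫⁻ y, gaussianExcess c' (a * wickExp c y) k ∂gaussianReal 0 c := by
  have hconv : gaussianReal 0 (c + c') = gaussianReal 0 c ∗ gaussianReal 0 c' := by
    rw [gaussianReal_conv_gaussianReal, add_zero]
  simp only [gaussianExcess]
  rw [hconv, Measure.lintegral_conv (by fun_prop)]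
  simp only [wickExp_add, mul_assoc]

theorem gaussianExcess_mono {c c' : ℝ≥0} (h : c ≤ c') (a k : ℝ≥0∞) :
    gaussianExcess c a k ≤ gaussianExcess c' a k := by
  obtain ⟨b, rfl⟩ := exists_add_of_le h
  rw [gaussianExcess_add]
  exact lintegral_mono fun y => tsub_le_gaussianExcess b _ k

-- Neyman–Pearson for `N(0, 1)` against `N(-√c, 1)`, whose optimal tests are half-lines `Iic t`.
theorem gaussianReal_Iic_sqrt_add (c : ℝ≥0) (t : ℝ) :
    gaussianReal 0 1 (Iic (t + √c)) =
      wickExp c (-√c * t) * gaussianReal 0 1 (Iic t) +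
        gaussianExcess c 1 (wickExp c (-√c * t)) := by
  have hshift : (gaussianReal 0 1).map (· + -√c) =
      (gaussianReal 0 1).withDensity fun x => wickExp c (-√c * x) := by
    have hc : ‖-√(c : ℝ)‖₊ ^ 2 / 1 = c := NNReal.eq (by simp)
    rw [gaussianReal_map_add_const, zero_add,
      gaussianReal_eq_withDensity_wickExp 0 (-√c) one_ne_zero]
    simp only [sub_zero, hc, NNReal.coe_one, div_one]
  have hscale : (gaussianReal 0 1).map (-√c * ·) = gaussianReal 0 c := by
    rw [gaussianReal_map_const_mul, mul_zero, mul_one]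
    congr 1
    exact NNReal.eq (by simp)
  have hanti : Antitone fun x => wickExp c (-√c * x) := fun x y h =>
    wickExp_mono c (mul_le_mul_of_nonpos_left h (neg_nonpos.2 (sqrt_nonneg _)))
  calc gaussianReal 0 1 (Iic (t + √c)) = (gaussianReal 0 1).map (· + -√c) (Iic t) := by
        rw [Measure.map_apply (by fun_prop) measurableSet_Iic]
        congr 1 with x
        simp only [mem_Iic, mem_preimage, ← sub_eq_add_neg, sub_le_iff_le_add]
    _ = wickExp c (-√c * t) * gaussianReal 0 1 (Iic t) +
          ∫⁻ x, (wickExp c (-√c * x) - wickExp c (-√c * t)) ∂gaussianReal 0 1 := by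
        rw [hshift]
        exact withDensity_apply_eq_mul_add_lintegral_tsub _ measurableSet_Iic
          (fun x hx => hanti hx) fun x hx => hanti (not_le.1 hx).le
    _ = _ := by
        rw [gaussianExcess, ← hscale, lintegral_map (by fun_prop) (by fun_prop)]
        simp only [one_mul]

/-- The likelihood ratio `L`, taken under `P`, is dominated by that of two Gaussians at squared
Mahalanobis distance `c`, in the sense that all hockey-stick divergences are smaller. -/
def IsGaussianDominated {Ω : Type*} [MeasurableSpace Ω] (P : Measure Ω) (L : Ω → ℝ≥0∞)
    (c : ℝ≥0) : Prop :=
  ∀ a k : ℝ≥0∞, ∫⁻ ω, (a * L ω - k) ∂P ≤ gaussianExcess c a k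

/-- `Q` is at least as hard to distinguish from `P` as `N(r, 1)` is from `N(0, 1)`: the trade-off
function of `(P, Q)` is at least `G_r`. Levels are written as `N(0, 1) (Iic t)`, which avoids the
values of `PhiInv` outside `(0, 1)`. -/
def GaussianTradeoff {Ω : Type*} [MeasurableSpace Ω] (P Q : Measure Ω) (r : ℝ) : Prop :=
  ∀ B, MeasurableSet B → ∀ t : ℝ,
    P B ≤ gaussianReal 0 1 (Iic t) → Q B ≤ gaussianReal 0 1 (Iic (t + r))

section Domination

variable {Ω Ω' : Type*} [MeasurableSpace Ω] [MeasurableSpace Ω'] {P Q : Measure Ω}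

theorem isGaussianDominated_wickExp {ℓ : Ω → ℝ} {c : ℝ≥0} (hℓ : HasLaw ℓ (gaussianReal 0 c) P) :
    IsGaussianDominated P (fun ω => wickExp c (ℓ ω)) c := fun a k =>
  (hℓ.lintegral_comp (f := fun y => a * wickExp c y - k) (by fun_prop)).le

theorem IsGaussianDominated.mono {L : Ω → ℝ≥0∞} {c c' : ℝ≥0} (h : IsGaussianDominated P L c)
    (hc : c ≤ c') : IsGaussianDominated P L c' := fun a k =>
  (h a k).trans (gaussianExcess_mono hc a k)

-- Conditionally on the first observation, its likelihood ratio is a constant that joins the scale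
-- `a`, so domination at all scales lets the two steps be replaced by Gaussians one after the other.
theorem IsGaussianDominated.compProd [SFinite P] {κ : Kernel Ω Ω'} [IsSFiniteKernel κ]
    {L₁ : Ω → ℝ≥0∞} {L₂ : Ω → Ω' → ℝ≥0∞} {c₁ c₂ : ℝ≥0} (hL₁ : Measurable L₁)
    (hL₂ : Measurable (uncurry L₂)) (h₁ : IsGaussianDominated P L₁ c₁)
    (h₂ : ∀ ω, IsGaussianDominated (κ ω) (L₂ ω) c₂) :
    IsGaussianDominated (P ⊗ₘ κ) (fun p => L₁ p.1 * L₂ p.1 p.2) (c₁ + c₂) := fun a k => by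
  have hL : Measurable fun p : Ω × Ω' => L₁ p.1 * L₂ p.1 p.2 := (hL₁.comp measurable_fst).mul hL₂
  calc ∫⁻ p, (a * (L₁ p.1 * L₂ p.1 p.2) - k) ∂(P ⊗ₘ κ)
      = ∫⁻ ω, ∫⁻ ω', (a * L₁ ω * L₂ ω ω' - k) ∂κ ω ∂P := by
        rw [Measure.lintegral_compProd ((hL.const_mul a).sub_const k)]
        simp only [mul_assoc]
    _ ≤ ∫⁻ ω, ∫⁻ y, (a * L₁ ω * wickExp c₂ y - k) ∂gaussianReal 0 c₂ ∂P :=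
        lintegral_mono fun ω => h₂ ω (a * L₁ ω) k
    _ = ∫⁻ y, ∫⁻ ω, (a * wickExp c₂ y * L₁ ω - k) ∂P ∂gaussianReal 0 c₂ := by
        rw [lintegral_lintegral_swap (by fun_prop)]
        simp only [mul_right_comm]
    _ ≤ ∫⁻ y, gaussianExcess c₁ (a * wickExp c₂ y) k ∂gaussianReal 0 c₂ :=
        lintegral_mono fun y => h₁ (a * wickExp c₂ y) k
    _ = gaussianExcess (c₁ + c₂) a k := by rw [add_comm, gaussianExcess_add]

theorem IsGaussianDominated.gaussianTradeoff {L : Ω → ℝ≥0∞} {c : ℝ≥0}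
    (h : IsGaussianDominated P L c) : GaussianTradeoff P (P.withDensity L) √c := by
  intro B hB t hBt
  let k := wickExp c (-√c * t)
  calc P.withDensity L B ≤ k * P B + ∫⁻ ω, (L ω - k) ∂P :=
        withDensity_apply_le_mul_add_lintegral_tsub P L k hB
    _ ≤ k * gaussianReal 0 1 (Iic t) + gaussianExcess c 1 k := by
        gcongr
        simpa only [one_mul] using h 1 k
    _ = gaussianReal 0 1 (Iic (t + √c)) := (gaussianReal_Iic_sqrt_add c t).symm

theorem GaussianTradeoff.map {r : ℝ} (h : GaussianTradeoff P Q r) {f : Ω → Ω'}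
    (hf : Measurable f) : GaussianTradeoff (P.map f) (Q.map f) r := fun B hB t => by
  rw [Measure.map_apply hf hB, Measure.map_apply hf hB]
  exact h _ (hf hB) t

variable {r t : ℝ} {A B : Set Ω}

theorem GaussianTradeoff.measureReal_le [IsFiniteMeasure P] (h : GaussianTradeoff P Q r)
    (hB : MeasurableSet B) (hBt : P.real B ≤ Phi t) : Q.real B ≤ Phi (t + r) :=
  ENNReal.toReal_mono (measure_ne_top _ _) <| h B hB t <|
    (ENNReal.toReal_le_toReal (measure_ne_top _ _) (measure_ne_top _ _)).1 hBt

theorem GaussianTradeoff.le_measureReal [IsProbabilityMeasure P] [IsProbabilityMeasure Q]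
    (h : GaussianTradeoff P Q r) (hA : MeasurableSet A) (hAt : Phi t ≤ P.real A) :
    Phi (t - r) ≤ Q.real A := by
  have hcompl : Q.real Aᶜ ≤ Phi (-t + r) := by
    refine h.measureReal_le hA.compl ?_
    rw [probReal_compl_eq_one_sub hA, Phi_neg]
    linarith
  rw [probReal_compl_eq_one_sub hA, neg_add_eq_sub, ← neg_sub t r, Phi_neg] at hcompl
  linarith

theorem GaussianTradeoff.measureReal_le_measureReal [IsProbabilityMeasure P]
    [IsProbabilityMeasure Q] (h : GaussianTradeoff P Q r) (hA : MeasurableSet A)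
    (hB : MeasurableSet B) {p q : ℝ} (hp : p ∈ Ioo (0 : ℝ) 1) (hq : q ∈ Ioo (0 : ℝ) 1)
    (hpA : p ≤ P.real A) (hBq : P.real B ≤ q) (hr : 2 * r ≤ PhiInv p - PhiInv q) :
    Q.real B ≤ Q.real A :=
  calc Q.real B ≤ Phi (PhiInv q + r) := h.measureReal_le hB (hBq.trans_eq (Phi_PhiInv hq).symm)
    _ ≤ Phi (PhiInv p - r) := monotone_Phi (by linarith)
    _ ≤ Q.real A := h.le_measureReal hA ((Phi_PhiInv hp).trans_le hpA)

end Domination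

section GaussPi

variable {d : ℕ}

instance (v : Fin d → ℝ) (s : ℝ≥0) : IsProbabilityMeasure (gaussPi d v s) := by
  unfold gaussPi; infer_instance

theorem measurable_gaussPi : Measurable fun p : (Fin d → ℝ) × ℝ≥0 => gaussPi d p.1 p.2 := by
  refine Measurable.measure_of_isPiSystem_of_isProbabilityMeasure
    (S := pi univ '' pi univ fun _ => {s : Set ℝ | MeasurableSet s}) generateFrom_pi.symm
    isPiSystem_pi ?_
  rintro _ ⟨s, hs, rfl⟩
  have hcoord (i : Fin d) : Measurable
      (uncurry gaussianReal ∘ fun p : (Fin d → ℝ) × ℝ≥0 => (p.1 i, p.2)) :=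
    measurable_gaussianReal.comp (by fun_prop)
  have hs' : ∀ i, MeasurableSet (s i) := fun i => hs i trivial
  simp only [gaussPi, Measure.pi_pi]
  exact Finset.measurable_prod _ fun i _ => (Measure.measurable_coe (hs' i)).comp (hcoord i)

/-- The Markov kernel `a ↦ N(f a, s a • I)`. -/
noncomputable def gaussPiKernel {α : Type*} [MeasurableSpace α] {f : α → Fin d → ℝ} {s : α → ℝ≥0}
    (hf : Measurable f) (hs : Measurable s) : Kernel α (Fin d → ℝ) where
  toFun a := gaussPi d (f a) (s a)
  measurable' := measurable_gaussPi.comp (hf.prodMk hs)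

instance {α : Type*} [MeasurableSpace α] {f : α → Fin d → ℝ} {s : α → ℝ≥0} (hf : Measurable f)
    (hs : Measurable s) : IsMarkovKernel (gaussPiKernel hf hs) :=
  ⟨fun a => inferInstanceAs (IsProbabilityMeasure (gaussPi d (f a) (s a)))⟩

theorem l2norm_sq (x : Fin d → ℝ) : l2norm x ^ 2 = ∑ i, x i ^ 2 :=
  sq_sqrt (Finset.sum_nonneg fun _ _ => sq_nonneg _)

/-- The signal-to-noise ratio `‖u‖₂² / s` of a shift `u` hidden in Gaussian noise of variance `s`:
the squared Mahalanobis distance between `N(v, s I)` and `N(v + u, s I)`. -/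
noncomputable def snr (u : Fin d → ℝ) (s : ℝ≥0) : ℝ≥0 :=
  ∑ i, ‖u i‖₊ ^ 2 / s

theorem coe_snr (u : Fin d → ℝ) (s : ℝ≥0) : (snr u s : ℝ) = l2norm u ^ 2 / s := by
  rw [l2norm_sq, Finset.sum_div]
  simp only [snr, NNReal.coe_sum, NNReal.coe_div, NNReal.coe_pow, coe_nnnorm, Real.norm_eq_abs,
    sq_abs]

/-- The likelihood ratio of `N(v', s I)` against `N(v, s I)`. -/
noncomputable def gaussPiRatio (v v' : Fin d → ℝ) (s : ℝ≥0) (x : Fin d → ℝ) : ℝ≥0∞ :=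
  wickExp (snr (v' - v) s) (∑ i, (v' - v) i * (x i - v i) / s)

@[fun_prop]
theorem measurable_gaussPiRatio {α : Type*} [MeasurableSpace α] {v v' x : α → Fin d → ℝ}
    {s : α → ℝ≥0} (hv : Measurable v) (hv' : Measurable v') (hs : Measurable s)
    (hx : Measurable x) : Measurable fun a => gaussPiRatio (v a) (v' a) (s a) (x a) := by
  simp only [gaussPiRatio, snr, Pi.sub_apply]
  fun_prop

theorem gaussPi_eq_withDensity_gaussPiRatio (v v' : Fin d → ℝ) {s : ℝ≥0} (hs : s ≠ 0) :
    gaussPi d v' s = (gaussPi d v s).withDensity (gaussPiRatio v v' s) := by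
  have hcoord := fun i => gaussianReal_eq_withDensity_wickExp (v i) (v' i) hs
  have : ∀ i, SigmaFinite ((gaussianReal (v i) s).withDensity fun x =>
      wickExp (‖v' i - v i‖₊ ^ 2 / s) ((v' i - v i) * (x - v i) / s)) := fun i => by
    rw [← hcoord]; infer_instance
  unfold gaussPi
  simp only [hcoord]
  rw [pi_withDensity fun i => by fun_prop]
  simp only [← wickExp_sum]
  rfl

theorem hasLaw_sum_mul_sub_div (v u : Fin d → ℝ) {s : ℝ≥0} (hs : s ≠ 0) :
    HasLaw (fun x => ∑ i, u i * (x i - v i) / s) (gaussianReal 0 (snr u s)) (gaussPi d v s) := by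
  have hcoord (i : Fin d) : HasLaw (fun x : Fin d → ℝ => u i * (x i - v i) / s)
      (gaussianReal 0 (‖u i‖₊ ^ 2 / s)) (gaussPi d v s) := by
    have hproj : HasLaw (fun x : Fin d → ℝ => x i) (gaussianReal (v i) s) (gaussPi d v s) :=
      (measurePreserving_eval (fun i => gaussianReal (v i) s) i).hasLaw
    have hvar : NNReal.mk (u i ^ 2) (sq_nonneg _) * s / NNReal.mk ((s : ℝ) ^ 2) (sq_nonneg _) =
        ‖u i‖₊ ^ 2 / s := by
      have hs' : (s : ℝ) ≠ 0 := NNReal.coe_ne_zero.2 hs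
      refine NNReal.eq ?_
      simp only [NNReal.coe_div, NNReal.coe_mul, NNReal.coe_mk, NNReal.coe_pow, coe_nnnorm,
        Real.norm_eq_abs, sq_abs]
      field_simp
    simpa only [sub_self, mul_zero, zero_div, hvar] using gaussianReal_div_const
      (gaussianReal_const_mul (gaussianReal_sub_const hproj (v i)) (u i)) s
  have hindep : iIndepFun (fun i (x : Fin d → ℝ) => u i * (x i - v i) / s) (gaussPi d v s) :=
    iIndepFun_pi (X := fun i (y : ℝ) => u i * (y - v i) / s) fun i => by fun_prop
  simpa only [Finset.sum_fn, Finset.sum_const_zero, snr] using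
    hasLaw_gaussianReal_sum hindep hcoord Finset.univ

theorem isGaussianDominated_gaussPiRatio (v v' : Fin d → ℝ) {s : ℝ≥0} (hs : s ≠ 0) :
    IsGaussianDominated (gaussPi d v s) (gaussPiRatio v v' s) (snr (v' - v) s) :=
  isGaussianDominated_wickExp (hasLaw_sum_mul_sub_div v (v' - v) hs)

theorem gaussianTradeoff_compProd_gaussPiKernel {n : ℕ} {v v' : Fin d → ℝ} {s : ℝ≥0} (hs : s ≠ 0)
    {f f' : (Fin d → ℝ) → Fin n → ℝ} {τ : (Fin d → ℝ) → ℝ≥0} (hf : Measurable f)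
    (hf' : Measurable f') (hτ : Measurable τ) (hτ0 : ∀ m, τ m ≠ 0) {r : ℝ} (hr : 0 ≤ r)
    (hsnr : ∀ m, (snr (v' - v) s + snr (f' m - f m) (τ m) : ℝ) ≤ r ^ 2) :
    GaussianTradeoff (gaussPi d v s ⊗ₘ gaussPiKernel hf hτ)
      (gaussPi d v' s ⊗ₘ gaussPiKernel hf' hτ) r := by
  lift r to ℝ≥0 using hr
  have hsnr' : ∀ m, snr (v' - v) s + snr (f' m - f m) (τ m) ≤ r ^ 2 := fun m => by
    exact_mod_cast hsnr m
  have hL₁ : Measurable (gaussPiRatio v v' s) := by fun_prop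
  have hL₂ : Measurable (uncurry fun m => gaussPiRatio (f m) (f' m) (τ m)) := by
    unfold uncurry; fun_prop
  have hκ (m : Fin d → ℝ) : gaussPiKernel hf' hτ m =
      (gaussPiKernel hf hτ m).withDensity (gaussPiRatio (f m) (f' m) (τ m)) :=
    gaussPi_eq_withDensity_gaussPiRatio (f m) (f' m) (hτ0 m)
  have hdom (m : Fin d → ℝ) : IsGaussianDominated (gaussPiKernel hf hτ m)
      (gaussPiRatio (f m) (f' m) (τ m)) (r ^ 2 - snr (v' - v) s) :=
    (isGaussianDominated_gaussPiRatio (f m) (f' m) (hτ0 m)).mono (le_tsub_of_add_le_left (hsnr' m))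
  have hbudget : snr (v' - v) s + (r ^ 2 - snr (v' - v) s) = r ^ 2 :=
    add_tsub_cancel_of_le (le_self_add.trans (hsnr' 0))
  rw [gaussPi_eq_withDensity_gaussPiRatio v v' hs, withDensity_compProd_eq_withDensity hL₁ hL₂ hκ,
    ← sqrt_sq r.coe_nonneg, ← NNReal.coe_pow, ← hbudget]
  exact ((isGaussianDominated_gaussPiRatio v v' hs).compProd hL₁ hL₂ hdom).gaussianTradeoff

end GaussPi

section Mask

variable {d : ℕ}

theorem linftyNorm_eq_norm (e : Fin d → ℝ) : linftyNorm e = ‖e‖ :=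
  le_antisymm (Real.iSup_le (norm_le_pi_norm e) (norm_nonneg e)) <|
    (pi_norm_le_iff_of_nonneg (Real.iSup_nonneg fun _ => abs_nonneg _)).2
      (le_ciSup (finite_range fun i => |e i|).bddAbove)

theorem l2norm_mul_sq_le (w e : Fin d → ℝ) : l2norm (w * e) ^ 2 ≤ ‖e‖ ^ 2 * l2norm w ^ 2 := by
  rw [l2norm_sq, l2norm_sq, Finset.mul_sum]
  refine Finset.sum_le_sum fun i _ => ?_
  rw [Pi.mul_apply, mul_pow, mul_comm]
  gcongr ?_ * _
  exact sq_le_sq.2 ((norm_le_pi_norm e i).trans (le_abs_self _))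

theorem l2norm_one_sq : l2norm (1 : Fin d → ℝ) ^ 2 = d := by
  simp [l2norm_sq]

theorem dim_ne_zero_of_l2norm_ne_zero {x : Fin d → ℝ} (hx : l2norm x ≠ 0) : d ≠ 0 := by
  rintro rfl
  exact hx (by simp [l2norm])

/-- The per-coordinate noise variance `(‖w‖₂² / d) σ²` paired with the mask `w`. -/
noncomputable def maskVariance (σ : ℝ) (w : Fin d → ℝ) : ℝ≥0 :=
  (l2norm w ^ 2 / d * σ ^ 2).toNNReal

theorem coe_maskVariance (σ : ℝ) (w : Fin d → ℝ) :
    (maskVariance σ w : ℝ) = l2norm w ^ 2 / d * σ ^ 2 :=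
  coe_toNNReal _ (by positivity)

theorem maskVariance_ne_zero {σ : ℝ} (hσ : σ ≠ 0) {w : Fin d → ℝ} (hw : l2norm w ≠ 0) :
    maskVariance σ w ≠ 0 := by
  have hd : (d : ℝ) ≠ 0 := Nat.cast_ne_zero.2 (dim_ne_zero_of_l2norm_ne_zero hw)
  rw [← NNReal.coe_ne_zero, coe_maskVariance]
  positivity

@[fun_prop]
theorem measurable_maskVariance (σ : ℝ) : Measurable (maskVariance (d := d) σ) := by
  unfold maskVariance l2norm; fun_prop

theorem snr_sq_toNNReal_le (e : Fin d → ℝ) (σ : ℝ) :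
    (snr e (σ ^ 2).toNNReal : ℝ) ≤ ‖e‖ ^ 2 * (d * (1 / σ ^ 2)) := by
  rw [coe_snr, coe_toNNReal _ (sq_nonneg σ), mul_one_div, ← mul_div_assoc]
  gcongr
  simpa only [one_mul, l2norm_one_sq] using l2norm_mul_sq_le 1 e

theorem snr_maskVariance_le (w e : Fin d → ℝ) (σ : ℝ) (hw : l2norm w ≠ 0) :
    (snr (w * e) (maskVariance σ w) : ℝ) ≤ ‖e‖ ^ 2 * (d * (1 / σ ^ 2)) :=
  calc (snr (w * e) (maskVariance σ w) : ℝ)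
      = l2norm (w * e) ^ 2 / (l2norm w ^ 2 / d * σ ^ 2) := by rw [coe_snr, coe_maskVariance]
    _ ≤ ‖e‖ ^ 2 * l2norm w ^ 2 / (l2norm w ^ 2 / d * σ ^ 2) := by
      gcongr; exact l2norm_mul_sq_le w e
    _ = ‖e‖ ^ 2 * (d * (1 / σ ^ 2)) := by field_simp

section Mechanism

variable {Y : Type*} [MeasurableSpace Y] {σ₁ σ₂ : ℝ} {w : (Fin d → ℝ) → Fin d → ℝ}
  {g : (Fin d → ℝ) → (Fin d → ℝ) → Y}

theorem maskedMech_eq_map_compProd (σ₁ σ₂ : ℝ) (hw : Measurable w) (hg : Measurable (uncurry g))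
    (X : Fin d → ℝ) :
    maskedMech σ₁ σ₂ w g X =
      (gaussPi d X (σ₁ ^ 2).toNNReal ⊗ₘ gaussPiKernel (hw.mul_const X)
        ((measurable_maskVariance σ₂).comp hw)).map (uncurry g) := by
  rw [map_uncurry_compProd _ _ hg]
  rfl

theorem isProbabilityMeasure_maskedMech (σ₁ σ₂ : ℝ) (hw : Measurable w)
    (hg : Measurable (uncurry g)) (X : Fin d → ℝ) :
    IsProbabilityMeasure (maskedMech σ₁ σ₂ w g X) := by
  rw [maskedMech_eq_map_compProd σ₁ σ₂ hw hg]
  exact Measure.isProbabilityMeasure_map hg.aemeasurable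

theorem gaussianTradeoff_maskedMech (hσ₁ : σ₁ ≠ 0) (hσ₂ : σ₂ ≠ 0) (hw : Measurable w)
    (hwpos : ∀ m, 0 < l2norm (w m)) (hg : Measurable (uncurry g)) (X e : Fin d → ℝ) :
    GaussianTradeoff (maskedMech σ₁ σ₂ w g X) (maskedMech σ₁ σ₂ w g (X + e))
      (‖e‖ * √(d * (1 / σ₁ ^ 2 + 1 / σ₂ ^ 2))) := by
  have hσ₁' : (σ₁ ^ 2).toNNReal ≠ 0 := by simpa using hσ₁
  have hsnr (m : Fin d → ℝ) : (snr (X + e - X) (σ₁ ^ 2).toNNReal +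
      snr (w m * (X + e) - w m * X) (maskVariance σ₂ (w m)) : ℝ) ≤
        (‖e‖ * √(d * (1 / σ₁ ^ 2 + 1 / σ₂ ^ 2))) ^ 2 := by
    rw [← mul_sub, add_sub_cancel_left, mul_pow, sq_sqrt (by positivity), mul_add, mul_add]
    exact add_le_add (snr_sq_toNNReal_le e σ₁) (snr_maskVariance_le (w m) e σ₂ (hwpos m).ne')
  rw [maskedMech_eq_map_compProd σ₁ σ₂ hw hg, maskedMech_eq_map_compProd σ₁ σ₂ hw hg]
  exact (gaussianTradeoff_compProd_gaussPiKernel hσ₁' _ _ _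
    (fun m => maskVariance_ne_zero hσ₂ (hwpos m).ne') (by positivity) hsnr).map hg

theorem ars_linfty_certificate_general [MeasurableSingletonClass Y] (hσ₁ : σ₁ ≠ 0) (hσ₂ : σ₂ ≠ 0)
    (hw : Measurable w) (hwpos : ∀ m, 0 < l2norm (w m)) (hg : Measurable (uncurry g))
    (X : Fin d → ℝ) (yPlus : Y) {pPlus pMinus : ℝ} (hpPlus : pPlus ∈ Ioo (0 : ℝ) 1)
    (hpMinus : pMinus ∈ Ioo (0 : ℝ) 1) (hplus : pPlus ≤ (maskedMech σ₁ σ₂ w g X).real {yPlus})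
    (hminus : ∀ y, y ≠ yPlus → (maskedMech σ₁ σ₂ w g X).real {y} ≤ pMinus) (e : Fin d → ℝ)
    (he : linftyNorm e ≤
      1 / (2 * √(d * (1 / σ₁ ^ 2 + 1 / σ₂ ^ 2))) * (PhiInv pPlus - PhiInv pMinus)) (y : Y) :
    (maskedMech σ₁ σ₂ w g (X + e)).real {y} ≤ (maskedMech σ₁ σ₂ w g (X + e)).real {yPlus} := by
  obtain rfl | hy := eq_or_ne y yPlus
  · exact le_rfl
  set S := √(d * (1 / σ₁ ^ 2 + 1 / σ₂ ^ 2))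
  have hprob := isProbabilityMeasure_maskedMech σ₁ σ₂ hw hg
  have hradius : 2 * (‖e‖ * S) ≤ PhiInv pPlus - PhiInv pMinus := by
    have hd : 0 < d := Nat.pos_of_ne_zero (dim_ne_zero_of_l2norm_ne_zero (hwpos 0).ne')
    have hS : 0 < S := sqrt_pos.2 (by positivity)
    rw [linftyNorm_eq_norm, one_div_mul_eq_div, le_div_iff₀ (by positivity)] at he
    linarith
  exact (gaussianTradeoff_maskedMech hσ₁ hσ₂ hw hwpos hg X e).measureReal_le_measureReal
    (measurableSet_singleton yPlus) (measurableSet_singleton y) hpPlus hpMinus hplus (hminus y hy)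
    hradius

end Mechanism

end Mask

end

/-- **Adaptive RS for `L_∞`-bounded adversaries.**
With an input-dependent mask `w : ℝ^d → [0,1]^d` (with `‖w(m₁)‖₂ > 0`), if
`P(M(X) = y₊) ≥ p₊ ≥ p₋ ≥ max_{y ≠ y₊} P(M(X) = y)` then for every `e` with
`‖e‖_∞ ≤ (1/(2√(d(1/σ₁² + 1/σ₂²))))(Φ⁻¹(p₊) − Φ⁻¹(p₋))`, `y₊` remains a most probable
class of the masked mechanism at `X + e`. -/
theorem ars_linfty_certificate {d : ℕ} {Y : Type*} [Fintype Y] [MeasurableSpace Y]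
    [MeasurableSingletonClass Y]
    (σ₁ σ₂ : ℝ) (hσ₁ : 0 < σ₁) (hσ₂ : 0 < σ₂)
    (w : (Fin d → ℝ) → (Fin d → ℝ)) (hwmeas : Measurable w)
    (hw01 : ∀ m₁ i, w m₁ i ∈ Set.Icc (0 : ℝ) 1)
    (hwpos : ∀ m₁, 0 < l2norm (w m₁))
    (g : (Fin d → ℝ) → (Fin d → ℝ) → Y)
    (hgmeas : Measurable fun q : (Fin d → ℝ) × (Fin d → ℝ) => g q.1 q.2)
    (X : Fin d → ℝ) (yPlus : Y) (pPlus pMinus : ℝ)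
    (hpPlus : pPlus ∈ Set.Ioo (0 : ℝ) 1) (hpMinus : pMinus ∈ Set.Ioo (0 : ℝ) 1)
    (hplus : ((maskedMech σ₁ σ₂ w g X) {yPlus}).toReal ≥ pPlus)
    (horder : pPlus ≥ pMinus)
    (hminus : ∀ y : Y, y ≠ yPlus → ((maskedMech σ₁ σ₂ w g X) {y}).toReal ≤ pMinus) :
    ∀ e : Fin d → ℝ,
      linftyNorm e ≤
        1 / (2 * Real.sqrt (d * (1 / σ₁ ^ 2 + 1 / σ₂ ^ 2))) * (PhiInv pPlus - PhiInv pMinus) →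
      ∀ y : Y,
        ((maskedMech σ₁ σ₂ w g (X + e)) {yPlus}).toReal ≥
          ((maskedMech σ₁ σ₂ w g (X + e)) {y}).toReal := fun e he y =>
  ars_linfty_certificate_general hσ₁.ne' hσ₂.ne' hwmeas hwpos hgmeas X yPlus hpPlus hpMinus hplus
    hminus e he y
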